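/- arXiv:2006.13034 — 2 statements merged into one kernel-verified Lean document; each statement's English description precedes it below -/
import Mathlib

section
/- The map Q : M → S ⊗_R M is a homomorphism of S-modules; that is, Q is R-linear and satisfies Q(x·m) = x·Q(m) for every m ∈ M (where x acts on S ⊗_R M through the left tensor factor). -/
/-!
Setup: `R` a commutative ring, `r ≥ 1`, `a₁, …, a_r ∈ R` with `a 0 = 1`,
`P(X) = ∑_{j=0}^{r} a_j X^{r-j} = X^r + a₁ X^{r-1} + ⋯ + a_r`,
`S = R[X]/(P)` with `x` the class of `X`, and `M` an `S`-module.
`S ⊗[R] M` is an `S`-module via the left tensor factor.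
-/

open Polynomial TensorProduct

noncomputable section

variable (R : Type*) [CommRing R] (r : ℕ) (a : ℕ → R)

/-- The polynomial `P(X) = ∑_{j=0}^{r} a_j X^{r-j}`; when `a 0 = 1` this is
`X^r + a₁ X^{r-1} + ⋯ + a_{r-1} X + a_r`. -/
def specPoly : Polynomial R := ∑ j ∈ Finset.range (r + 1), Polynomial.C (a j) * Polynomial.X ^ (r - j)

/-- `S = R[X]/(P)`. -/
abbrev SpecS := AdjoinRoot (specPoly R r a)

/-- `x ∈ S`, the class of `X`. -/
def specX : SpecS R r a := AdjoinRoot.root _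

variable (M : Type*) [AddCommGroup M] [Module R M] [Module (SpecS R r a) M]
  [IsScalarTower R (SpecS R r a) M]

/-- `ev : S ⊗_R M → M`, `p ⊗ m ↦ p • m`. -/
def specEv : SpecS R r a ⊗[R] M →ₗ[SpecS R r a] M :=
  LinearMap.liftBaseChange _ LinearMap.id

/-- `Ψ : S ⊗_R M → S ⊗_R M`, `q ⊗ m ↦ q ⊗ (x • m) − (x * q) ⊗ m`. -/
def specPsi : SpecS R r a ⊗[R] M →ₗ[SpecS R r a] SpecS R r a ⊗[R] M :=
  LinearMap.baseChange (SpecS R r a)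
      ((LinearMap.lsmul (SpecS R r a) M (specX R r a)).restrictScalars R)
    - LinearMap.lsmul (SpecS R r a) (SpecS R r a ⊗[R] M) (specX R r a)

/-- `Q : M → S ⊗_R M`,
`Q(m) = ∑_{i=0}^{r−1} x^i ⊗ ( ∑_{j=0}^{r−1−i} a_j x^{r−1−i−j} ) • m`. -/
def specQ (m : M) : SpecS R r a ⊗[R] M :=
  ∑ i ∈ Finset.range r,
    ((specX R r a) ^ i) ⊗ₜ[R]
      ((∑ j ∈ Finset.range (r - i),
          algebraMap R (SpecS R r a) (a j) * (specX R r a) ^ (r - 1 - i - j)) • m)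

theorem specPoly_root :
    ∑ j ∈ Finset.range (r + 1),
      algebraMap R (SpecS R r a) (a j) * (specX R r a) ^ (r - j) = 0 := by
  have h : AdjoinRoot.mk (specPoly R r a)
      (∑ j ∈ Finset.range (r + 1), Polynomial.C (a j) * Polynomial.X ^ (r - j)) = 0 :=
    AdjoinRoot.mk_self (f := specPoly R r a)
  rw [map_sum] at h
  simpa [specX, AdjoinRoot.algebraMap_eq] using h

/-- The coefficient `b_k = ∑_{j<k} a_j x^{k-1-j}`. -/
def specB (k : ℕ) : SpecS R r a :=
  ∑ j ∈ Finset.range k, algebraMap R (SpecS R r a) (a j) * (specX R r a) ^ (k - 1 - j)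

theorem specB_succ (k : ℕ) :
    specB R r a (k + 1) = specX R r a * specB R r a k + algebraMap R (SpecS R r a) (a k) := by
  unfold specB
  rw [Finset.sum_range_succ, Finset.mul_sum]
  congr 1
  · refine Finset.sum_congr rfl fun j hj => ?_
    have hj' := Finset.mem_range.1 hj
    have : k + 1 - 1 - j = (k - 1 - j) + 1 := by omega
    rw [this, pow_succ]; ring
  · simp

theorem specB_top : specB R r a (r + 1) = 0 := by
  simpa [specB] using specPoly_root R r a

theorem specQ_eq (m : M) : specQ R r a M m =
    ∑ i ∈ Finset.range r, ((specX R r a) ^ i) ⊗ₜ[R] (specB R r a (r - i) • m) := by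
  unfold specQ specB
  refine Finset.sum_congr rfl fun i _ => ?_
  congr 2
  refine Finset.sum_congr rfl fun j _ => ?_
  congr 2
  omega

theorem specQ_add (m m' : M) :
    specQ R r a M (m + m') = specQ R r a M m + specQ R r a M m' := by
  simp only [specQ_eq, smul_add, TensorProduct.tmul_add, Finset.sum_add_distrib]

theorem specQ_smulR (c : R) (m : M) : specQ R r a M (c • m) = c • specQ R r a M m := by
  simp only [specQ_eq, Finset.smul_sum]
  refine Finset.sum_congr rfl fun i _ => ?_
  rw [← TensorProduct.tmul_smul, ← algebraMap_smul (SpecS R r a) c m,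
    ← algebraMap_smul (SpecS R r a) c (specB R r a (r - i) • m), smul_smul, smul_smul, mul_comm]

theorem specQ_smulX (m : M) :
    specQ R r a M (specX R r a • m) = specX R r a • specQ R r a M m := by
  rw [← sub_eq_zero]
  simp only [specQ_eq, Finset.smul_sum]
  rw [← Finset.sum_sub_distrib]
  let T : ℕ → SpecS R r a ⊗[R] M := fun i =>
    ((specX R r a) ^ i) ⊗ₜ[R] (specB R r a (r + 1 - i) • m)
  let A : ℕ → SpecS R r a := fun i =>
    algebraMap R (SpecS R r a) (a (r - i)) * (specX R r a) ^ i
  have step : ∀ i ∈ Finset.range r,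
      ((specX R r a) ^ i) ⊗ₜ[R] (specB R r a (r - i) • specX R r a • m)
        - specX R r a • (((specX R r a) ^ i) ⊗ₜ[R] (specB R r a (r - i) • m))
      = (T i - T (i + 1)) - (A i) ⊗ₜ[R] m := by
    intro i hi
    have hi' := Finset.mem_range.1 hi
    have e1 : r + 1 - i = (r - i) + 1 := by omega
    have e2 : r + 1 - (i + 1) = r - i := by omega
    simp only [T, A, e1, e2, specB_succ, add_smul, TensorProduct.tmul_add,
      TensorProduct.smul_tmul', smul_eq_mul, smul_smul, algebraMap_smul, TensorProduct.tmul_smul]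
    rw [← Algebra.smul_def, ← TensorProduct.smul_tmul', pow_succ', mul_comm (specX R r a) (specB R r a (r - i))]
    abel
  rw [Finset.sum_congr rfl step, Finset.sum_sub_distrib, Finset.sum_range_sub',
    ← TensorProduct.sum_tmul]
  have hT0 : T 0 = 0 := by simp [T, specB_top]
  have hTr : T r = (A r) ⊗ₜ[R] m := by
    have e : r + 1 - r = 0 + 1 := by omega
    simp only [T, A, e, specB_succ]
    have e0 : specB R r a 0 = 0 := by simp [specB]
    rw [e0, mul_zero, zero_add, Nat.sub_self, algebraMap_smul, ← Algebra.smul_def,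
      TensorProduct.smul_tmul]
  rw [hT0, hTr, zero_sub, ← neg_add', neg_eq_zero, ← TensorProduct.add_tmul, add_comm,
    ← Finset.sum_range_succ, ← Finset.sum_range_reflect]
  have : ∑ j ∈ Finset.range (r + 1), A (r + 1 - 1 - j) = 0 := by
    rw [← specPoly_root R r a]
    refine Finset.sum_congr rfl fun j hj => ?_
    have hj' := Finset.mem_range.1 hj
    have e1 : r + 1 - 1 - j = r - j := by omega
    have e2 : r - (r - j) = j := by omega
    simp only [A, e1, e2]
  rw [this, TensorProduct.zero_tmul]

theorem specQ_smulS (s : SpecS R r a) (m : M) :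
    specQ R r a M (s • m) = s • specQ R r a M m := by
  induction s using AdjoinRoot.induction_on with
  | ih p =>
    induction p using Polynomial.induction_on' generalizing m with
    | add p q hp hq => rw [map_add, add_smul, specQ_add, hp, hq, add_smul]
    | monomial n c =>
      have hX : ∀ (n : ℕ) (m : M), specQ R r a M (specX R r a ^ n • m)
          = specX R r a ^ n • specQ R r a M m := by
        intro n
        induction n with
        | zero => intro m; simp
        | succ n ih => intro m; rw [pow_succ, mul_smul, ih, specQ_smulX, ← mul_smul]
      have e : AdjoinRoot.mk (specPoly R r a) (Polynomial.monomial n c)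
          = algebraMap R (SpecS R r a) c * specX R r a ^ n := by
        rw [← Polynomial.C_mul_X_pow_eq_monomial]
        simp [specX, AdjoinRoot.algebraMap_eq]
      rw [e, mul_smul, mul_smul, algebraMap_smul, algebraMap_smul, specQ_smulR, hX]

/-- `Q : M → S ⊗_R M` is a homomorphism of `S`-modules; that is, `Q` is `R`-linear
(additive and commuting with `R`-scalars) and satisfies `Q(x • m) = x • Q(m)` for every `m`. -/
theorem statement_1 (hr : 1 ≤ r) (ha : a 0 = 1) :
    IsLinearMap (SpecS R r a) (specQ R r a M) ∧
    (∀ m m' : M, specQ R r a M (m + m') = specQ R r a M m + specQ R r a M m') ∧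
    (∀ (c : R) (m : M), specQ R r a M (c • m) = c • specQ R r a M m) ∧
    (∀ m : M, specQ R r a M (specX R r a • m) = specX R r a • specQ R r a M m) := by
  exact ⟨⟨specQ_add R r a M, specQ_smulS R r a M⟩, specQ_add R r a M, specQ_smulR R r a M,
    specQ_smulX R r a M⟩
end
end

section
/- The kernel of Ψ equals the image of Q; more precisely, if z = Σ_{i=0}^{r−1} x^i ⊗ m_i ∈ S ⊗_R M satisfies Ψ(z) = 0, then, setting m = m_{r−1}, one has m_i = ( Σ_{j=0}^{r−1−i} a_j·x^{r−1−i−j} )·m for every i = 0, …, r−1, and hence z = Q(m). -/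
/-!
Setup: `R` a commutative ring, `r ≥ 1`, `a₁, …, a_r ∈ R` with `a 0 = 1`,
`P(X) = ∑_{j=0}^{r} a_j X^{r-j} = X^r + a₁ X^{r-1} + ⋯ + a_r`,
`S = R[X]/(P)` with `x` the class of `X`, and `M` an `S`-module.
`S ⊗[R] M` is an `S`-module via the left tensor factor.
-/

open Polynomial TensorProduct

noncomputable section

variable (R : Type*) [CommRing R] (r : ℕ) (a : ℕ → R)

variable (M : Type*) [AddCommGroup M] [Module R M] [Module (SpecS R r a) M]
  [IsScalarTower R (SpecS R r a) M]

theorem specPoly_monic (ha : a 0 = 1) : (specPoly R r a).Monic := by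
  unfold specPoly
  rw [Finset.sum_range_succ', ha]
  simp only [Nat.sub_zero, map_one, one_mul]
  rw [add_comm]
  rcases Nat.eq_zero_or_pos r with h | h
  · subst h; simp
  · apply Polynomial.monic_X_pow_add
    refine lt_of_le_of_lt (Polynomial.degree_sum_le _ _) ?_
    refine (Finset.sup_lt_iff (WithBot.bot_lt_coe r)).2 ?_
    intro j hj
    refine lt_of_le_of_lt (Polynomial.degree_C_mul_X_pow_le _ _) ?_
    have := Finset.mem_range.1 hj
    exact WithBot.coe_lt_coe.2 (by simp only [Nat.cast_id]; omega)

theorem specPoly_natDegree [Nontrivial R] (ha : a 0 = 1) : (specPoly R r a).natDegree = r := by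
  unfold specPoly
  rw [Finset.sum_range_succ', ha]
  simp only [Nat.sub_zero, map_one, one_mul]
  rw [add_comm]
  rcases Nat.eq_zero_or_pos r with h | h
  · subst h; simp
  · rw [Polynomial.natDegree_add_eq_left_of_degree_lt]
    · simp
    rw [Polynomial.degree_X_pow]
    refine lt_of_le_of_lt (Polynomial.degree_sum_le _ _) ?_
    refine (Finset.sup_lt_iff (WithBot.bot_lt_coe r)).2 ?_
    intro j hj
    refine lt_of_le_of_lt (Polynomial.degree_C_mul_X_pow_le _ _) ?_
    have := Finset.mem_range.1 hj
    exact WithBot.coe_lt_coe.2 (by simp only [Nat.cast_id]; omega)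

theorem spec_basis [Nontrivial R] (ha : a 0 = 1) :
    ∃ b : Module.Basis (Fin r) R (SpecS R r a), ∀ i, b i = specX R r a ^ (i : ℕ) := by
  have hd : (AdjoinRoot.powerBasis' (specPoly_monic R r a ha)).dim = r := by
    rw [AdjoinRoot.powerBasis'_dim, specPoly_natDegree R r a ha]
  refine ⟨(AdjoinRoot.powerBasis' (specPoly_monic R r a ha)).basis.reindex (finCongr hd), ?_⟩
  intro i
  rw [Module.Basis.reindex_apply, PowerBasis.basis_eq_pow]
  simp [specX]

theorem spec_indep (ha : a 0 = 1) (m : ℕ → M)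
    (h : ∑ i ∈ Finset.range r, (specX R r a ^ i) ⊗ₜ[R] m i = 0) : ∀ i < r, m i = 0 := by
  intro i hi
  rcases subsingleton_or_nontrivial R with hR | hR
  · have := Module.subsingleton R M
    exact Subsingleton.elim _ _
  obtain ⟨b, hb⟩ := spec_basis R r a ha
  rw [Finset.sum_range] at h
  have h2 := TensorProduct.sum_tmul_basis_left_eq_zero b
    (Finsupp.equivFunOnFinite.symm fun i : Fin r => m i)
    (by rw [Finsupp.sum_fintype _ _ (by simp)]; simpa [hb] using h)
  simpa using DFunLike.congr_fun h2 ⟨i, hi⟩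

theorem spec_span (ha : a 0 = 1) (z : SpecS R r a ⊗[R] M) :
    ∃ m : ℕ → M, z = ∑ i ∈ Finset.range r, (specX R r a ^ i) ⊗ₜ[R] m i := by
  rcases subsingleton_or_nontrivial R with hR | hR
  · have := Module.subsingleton R (SpecS R r a ⊗[R] M)
    exact ⟨0, Subsingleton.elim _ _⟩
  obtain ⟨b, hb⟩ := spec_basis R r a ha
  obtain ⟨f, hf⟩ := TensorProduct.eq_repr_basis_left b z
  refine ⟨fun i => if h : i < r then f ⟨i, h⟩ else 0, ?_⟩
  rw [← hf, Finsupp.sum_fintype _ _ (by simp), Finset.sum_range]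
  simp [hb]

theorem spec_rel (ha : a 0 = 1) :
    specX R r a ^ r + ∑ i ∈ Finset.range r, a (r - i) • specX R r a ^ i = 0 := by
  have h : AdjoinRoot.mk (specPoly R r a) (specPoly R r a) = 0 := AdjoinRoot.mk_self
  conv_lhs at h => rw [← AdjoinRoot.aeval_eq]; arg 2; unfold specPoly
  rw [map_sum, ← Finset.sum_range_reflect, Finset.sum_range_succ] at h
  rw [← h, add_comm]
  congr 1
  · refine Finset.sum_congr rfl fun i hi => ?_
    have := Finset.mem_range.1 hi
    have e1 : r + 1 - 1 - i = r - i := by omega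
    have e2 : r - (r - i) = i := by omega
    simp [e1, e2, specX, Algebra.smul_def]
  · simp [ha, specX]

theorem spec_Psi_sum (ha : a 0 = 1) (hr : 1 ≤ r) (m : ℕ → M) :
    specPsi R r a M (∑ i ∈ Finset.range r, (specX R r a ^ i) ⊗ₜ[R] m i) =
    ∑ i ∈ Finset.range r, (specX R r a ^ i) ⊗ₜ[R]
      (specX R r a • m i + a (r - i) • m (r - 1) - (if i = 0 then 0 else m (i - 1))) := by
  have hΨ : ∀ i, specPsi R r a M ((specX R r a ^ i) ⊗ₜ[R] m i) =
      (specX R r a ^ i) ⊗ₜ[R] (specX R r a • m i) - (specX R r a ^ (i+1)) ⊗ₜ[R] m i := by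
    intro i
    simp [specPsi, TensorProduct.smul_tmul', pow_succ']
  have hrel := eq_neg_of_add_eq_zero_left (spec_rel R r a ha)
  simp only [map_sum, hΨ, TensorProduct.tmul_sub, TensorProduct.tmul_add, Finset.sum_sub_distrib,
    Finset.sum_add_distrib]
  have e2 : ∑ i ∈ Finset.range r, (specX R r a ^ i) ⊗ₜ[R] (a (r - i) • m (r - 1)) =
      - ((specX R r a ^ r) ⊗ₜ[R] m (r - 1)) := by
    rw [hrel, TensorProduct.neg_tmul, neg_neg, TensorProduct.sum_tmul]
    simp only [TensorProduct.smul_tmul]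
  rw [e2]
  obtain ⟨n, rfl⟩ : ∃ n, r = n + 1 := ⟨r - 1, by omega⟩
  rw [Finset.sum_range_succ (fun i => (specX R (n+1) a ^ (i+1)) ⊗ₜ[R] m i),
    Finset.sum_range_succ' (fun i => (specX R (n+1) a ^ i) ⊗ₜ[R] (if i = 0 then 0 else m (i - 1)))]
  simp
  abel

/-- the coefficient `∑_{j<r-i} a_j x^{r-1-i-j}` -/
def specC (i : ℕ) : SpecS R r a :=
  ∑ j ∈ Finset.range (r - i), algebraMap R (SpecS R r a) (a j) * (specX R r a) ^ (r - 1 - i - j)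

theorem specC_rec (i : ℕ) (hi : i < r) :
    specC R r a i = specX R r a * specC R r a (i+1) + algebraMap R _ (a (r - (i + 1))) := by
  unfold specC
  have e : r - i = (r - (i+1)) + 1 := by omega
  rw [e, Finset.sum_range_succ, Finset.mul_sum]
  congr 1
  · refine Finset.sum_congr rfl fun j hj => ?_
    have := Finset.mem_range.1 hj
    have e : r - 1 - i - j = (r - 1 - (i+1) - j) + 1 := by omega
    rw [e]; ring
  · have e : r - 1 - i - (r - (i+1)) = 0 := by omega
    rw [e]; simp

theorem specC_zero (ha : a 0 = 1) (hr : 1 ≤ r) :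
    specX R r a * specC R r a 0 + algebraMap R _ (a r) = 0 := by
  have h := spec_rel R r a ha
  rw [← h]
  unfold specC
  rw [Finset.mul_sum, Nat.sub_zero]
  obtain ⟨n, rfl⟩ : ∃ n, r = n + 1 := ⟨r - 1, by omega⟩
  rw [Finset.sum_range_succ' , Finset.sum_range_succ' (fun i => a (n + 1 - i) • _),
    ← Finset.sum_range_reflect]
  have : ∀ k ∈ Finset.range n, specX R (n+1) a * (algebraMap R (SpecS R (n+1) a) (a (n - 1 - k + 1)) * specX R (n+1) a ^ (n + 1 - 1 - 0 - (n - 1 - k + 1))) = a (n + 1 - (k + 1)) • specX R (n+1) a ^ (k+1) := by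
    intro k hk
    have := Finset.mem_range.1 hk
    have e1 : n - 1 - k + 1 = n - k := by omega
    have e2 : n + 1 - 1 - 0 - (n - k) = k := by omega
    have e3 : n + 1 - (k + 1) = n - k := by omega
    rw [e1, e2, e3, Algebra.smul_def]; ring
  rw [Finset.sum_congr rfl this]
  simp [ha, Algebra.smul_def]
  ring

theorem specC_last (ha : a 0 = 1) (hr : 1 ≤ r) : specC R r a (r - 1) = 1 := by
  have e : r - (r - 1) = 1 := by omega
  simp [specC, e, ha]

theorem spec_Psi_Q (ha : a 0 = 1) (hr : 1 ≤ r) (m : M) : specPsi R r a M (specQ R r a M m) = 0 := by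
  have := spec_Psi_sum R r a M ha hr (fun i => specC R r a i • m)
  change specPsi R r a M (specQ R r a M m) = _ at this
  rw [this]
  refine Finset.sum_eq_zero fun i hi => ?_
  have hi := Finset.mem_range.1 hi
  have hz : specX R r a • specC R r a i • m + a (r - i) • specC R r a (r - 1) • m -
      (if i = 0 then 0 else specC R r a (i - 1) • m) = 0 := by
    rw [specC_last R r a ha hr, one_smul, ← algebraMap_smul (SpecS R r a) (a (r - i)) m,
      smul_smul, ← add_smul]
    rcases i with _ | i
    · rw [Nat.sub_zero, specC_zero R r a ha hr]; simp
    · simp [specC_rec R r a i (by omega)]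
  rw [hz, TensorProduct.tmul_zero]

theorem spec_unique (ha : a 0 = 1) (hr : 1 ≤ r) (m : ℕ → M)
    (h : specPsi R r a M (∑ i ∈ Finset.range r, (specX R r a ^ i) ⊗ₜ[R] m i) = 0) :
    ∀ i < r, m i = specC R r a i • m (r - 1) := by
  rw [spec_Psi_sum R r a M ha hr] at h
  have h := spec_indep R r a M ha _ h
  have key : ∀ k < r, m (r - 1 - k) = specC R r a (r - 1 - k) • m (r - 1) := by
    intro k
    induction k with
    | zero => intro _; simp [specC_last R r a ha hr]
    | succ k ih =>
      intro hk
      have h1 := h (r - 1 - k) (by omega)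
      rw [if_neg (by omega), ih (by omega)] at h1
      have e : r - 1 - k = r - 1 - (k + 1) + 1 := by omega
      have h2 := specC_rec R r a (r - 1 - (k+1)) (by omega)
      rw [← e] at h2
      rw [h2, add_smul, mul_smul, algebraMap_smul]
      rw [sub_eq_zero] at h1
      rw [h1]
      congr 1
  intro i hi
  have := key (r - 1 - i) (by omega)
  rwa [show r - 1 - (r - 1 - i) = i by omega] at this

/-- The kernel of `Ψ` equals the image of `Q`; more precisely, if
`z = ∑_{i<r} x^i ⊗ m_i` satisfies `Ψ(z) = 0` then, with `m = m_{r−1}`, one has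
`m_i = (∑_{j≤r−1−i} a_j x^{r−1−i−j}) • m` for every `i < r`, and hence `z = Q(m)`. -/
theorem statement_4 (hr : 1 ≤ r) (ha : a 0 = 1) :
    ({z : SpecS R r a ⊗[R] M | specPsi R r a M z = 0} = Set.range (specQ R r a M)) ∧
    (∀ m : ℕ → M,
      specPsi R r a M (∑ i ∈ Finset.range r, ((specX R r a) ^ i) ⊗ₜ[R] m i) = 0 →
      (∀ i ∈ Finset.range r,
          m i = (∑ j ∈ Finset.range (r - i),
              algebraMap R (SpecS R r a) (a j) * (specX R r a) ^ (r - 1 - i - j)) • m (r - 1)) ∧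
      (∑ i ∈ Finset.range r, ((specX R r a) ^ i) ⊗ₜ[R] m i) = specQ R r a M (m (r - 1))) := by
  have main : ∀ m : ℕ → M,
      specPsi R r a M (∑ i ∈ Finset.range r, ((specX R r a) ^ i) ⊗ₜ[R] m i) = 0 →
      (∀ i ∈ Finset.range r,
          m i = (∑ j ∈ Finset.range (r - i),
              algebraMap R (SpecS R r a) (a j) * (specX R r a) ^ (r - 1 - i - j)) • m (r - 1)) ∧
      (∑ i ∈ Finset.range r, ((specX R r a) ^ i) ⊗ₜ[R] m i) = specQ R r a M (m (r - 1)) := by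
    intro m h
    have hu := spec_unique R r a M ha hr m h
    refine ⟨fun i hi => hu i (Finset.mem_range.1 hi), ?_⟩
    exact Finset.sum_congr rfl fun i hi => congrArg _ (hu i (Finset.mem_range.1 hi))
  refine ⟨?_, main⟩
  ext z
  constructor
  · intro hz
    obtain ⟨m, rfl⟩ := spec_span R r a M ha z
    exact ⟨_, (main m hz).2.symm⟩
  · rintro ⟨m, rfl⟩
    exact spec_Psi_Q R r a M ha hr m
end
end
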